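/- Let l ≥ 2 be even. The lowest-degree homogeneous part (in the variables (a, θ)) of det(𝒢_l + (1+a)·Id) after setting μ = 1 and r = 1 + a, and projectivizing with θ, equals the determinant of the (l/2)×(l/2) tridiagonal matrix with diagonal entries (2a - (l/2)θ, 2a, …, 2a), superdiagonal entries ((l/2)+1)θ, ((l/2)+2)θ, …, (l-1)θ, and subdiagonal entries ((l/2)-1)θ, …, 1·θ; and for each fixed θ > 0 this determinant, as a polynomial in a, has l/2 distinct real roots. -/

import Mathlib

open MvPolynomial Matrix

noncomputable def tgt18 (m : ℕ) : Matrix (Fin m) (Fin m) (MvPolynomial (Fin 2) ℝ) :=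
  Matrix.of fun i j : Fin m =>
        (if i = j then
          2 * X 0 - (if (i : ℕ) = 0 then C (((m : ℕ)) : ℝ) * X 1 else 0)
        else if (i : ℕ) + 1 = (j : ℕ) then C (((m + 1 + (i : ℕ) : ℕ)) : ℝ) * X 1
        else if (j : ℕ) + 1 = (i : ℕ) then C (((m - (i : ℕ) : ℕ)) : ℝ) * X 1
        else 0 : MvPolynomial (Fin 2) ℝ)

noncomputable def src18 (l : ℕ) : Matrix (Fin l) (Fin l) (MvPolynomial (Fin 2) ℝ) :=
  Matrix.of fun i j : Fin l =>
          ((if (i : ℕ) + (j : ℕ) = l - 1 then 1 else 0)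
          + (if (i : ℕ) + (j : ℕ) = l then -(C (((i : ℕ) : ℕ) : ℝ)) * X 1 else 0)
          + (if i = j then 1 + X 0 else 0) : MvPolynomial (Fin 2) ℝ)

noncomputable def phi18 : MvPolynomial (Fin 2) ℝ →ₐ[ℝ] Polynomial (MvPolynomial (Fin 2) ℝ) :=
  MvPolynomial.aeval (fun i => Polynomial.X * Polynomial.C (X i))

lemma phi18_coeff (k : ℕ) (f : MvPolynomial (Fin 2) ℝ) :
    homogeneousComponent k f = (phi18 f).coeff k := by
  induction f using MvPolynomial.induction_on' with
  | monomial d c =>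
    have h1 : phi18 (monomial d c) =
        Polynomial.C (monomial d c) * Polynomial.X ^ d.degree := by
      have h2 : (algebraMap ℝ (Polynomial (MvPolynomial (Fin 2) ℝ))) c = Polynomial.C (C c) := rfl
      rw [phi18, aeval_monomial, monomial_eq, h2]
      simp only [mul_pow, Finset.prod_mul_distrib, map_mul, Finsupp.prod, map_prod, map_pow,
        Finset.prod_pow_eq_pow_sum, Finsupp.degree_apply]
      ring
    rw [h1, Polynomial.coeff_C_mul, Polynomial.coeff_X_pow]
    have hm : monomial d c ∈ homogeneousSubmodule (Fin 2) ℝ d.degree :=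
      (mem_homogeneousSubmodule _ _).2 (isHomogeneous_monomial c rfl)
    rw [homogeneousComponent_of_mem hm]
    split_ifs <;> simp
  | add p q hp hq => simp [hp, hq]

lemma coeff_core {m : ℕ} (P Q T : Matrix (Fin m) (Fin m) (MvPolynomial (Fin 2) ℝ))
    (a : MvPolynomial (Fin 2) ℝ) (ha : phi18 a = Polynomial.X * Polynomial.C a)
    (hP : ∀ i j, phi18 (P i j) = Polynomial.X * Polynomial.C (P i j))
    (hQ : ∀ i j, phi18 (Q i j) = Polynomial.X * Polynomial.C (Q i j))
    (hT : ∀ i j, phi18 (T i j) = Polynomial.X * Polynomial.C (T i j)) :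
    ∃ g : Polynomial (MvPolynomial (Fin 2) ℝ),
      phi18 (fromBlocks (diagonal fun _ => 1 + a) P Q T).det = Polynomial.X ^ m * g ∧
      g.coeff 0 = T.det := by
  let N : Matrix (Fin m ⊕ Fin m) (Fin m ⊕ Fin m) (Polynomial (MvPolynomial (Fin 2) ℝ)) :=
    fromBlocks (diagonal fun _ => 1 + Polynomial.X * Polynomial.C a)
      (of fun i j => Polynomial.X * Polynomial.C (P i j))
      (of fun i j => Polynomial.C (Q i j)) (of fun i j => Polynomial.C (T i j))
  refine ⟨N.det, ?_, ?_⟩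
  · have h := det_mul_column (fun s : Fin m ⊕ Fin m =>
      Sum.elim (fun _ => (1 : Polynomial (MvPolynomial (Fin 2) ℝ))) (fun _ => Polynomial.X) s) N
    have h3 : ∏ s : Fin m ⊕ Fin m, Sum.elim (fun _ => (1 : Polynomial (MvPolynomial (Fin 2) ℝ)))
        (fun _ => Polynomial.X) s = Polynomial.X ^ m := by simp
    rw [h3] at h
    rw [← h, AlgHom.map_det]
    congr 1
    ext1 i j
    rcases i with i | i <;> rcases j with j | j
    · by_cases hij : i = j
      · subst hij; simp [N, ha]
      · simp [N, hij]
    · simp [N, hP]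
    · simp [N, hQ]
    · simp [N, hT]
  · rw [Polynomial.coeff_zero_eq_eval_zero]
    have : N.map (Polynomial.eval 0) = fromBlocks 1 0 Q T := by
      ext1 i j
      rcases i with i | i <;> rcases j with j | j
      · by_cases hij : i = j
        · subst hij; simp [N]
        · simp [N, hij]
      · simp [N]
      · simp [N]
      · simp [N]
    have h2 : N.det.eval 0 = (N.map (Polynomial.eval 0)).det :=
      RingHom.map_det (Polynomial.evalRingHom 0) N
    rw [h2, this, det_fromBlocks_zero₁₂]
    simp

lemma src_det (m : ℕ) : ∃ P Q : Matrix (Fin m) (Fin m) (MvPolynomial (Fin 2) ℝ),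
    (∀ i j, phi18 (P i j) = Polynomial.X * Polynomial.C (P i j)) ∧
    (∀ i j, phi18 (Q i j) = Polynomial.X * Polynomial.C (Q i j)) ∧
    (src18 (m + m)).det = (fromBlocks (diagonal fun _ => 1 + X 0) P Q (tgt18 m)ᵀ).det := by
  let P : Matrix (Fin m) (Fin m) (MvPolynomial (Fin 2) ℝ) := of fun p q =>
    if p = q then - X 0 else if (p : ℕ) + 1 = q then - (C (((m - q : ℕ)) : ℝ) * X 1) else 0
  let Q : Matrix (Fin m) (Fin m) (MvPolynomial (Fin 2) ℝ) := of fun p q =>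
    if p = q then - X 0 else if (q : ℕ) + 1 = p then - (C (((m + p : ℕ)) : ℝ) * X 1) else 0
  let A : Matrix (Fin m) (Fin m) (MvPolynomial (Fin 2) ℝ) := diagonal fun _ => 1 + X 0
  let D : Matrix (Fin m) (Fin m) (MvPolynomial (Fin 2) ℝ) := of fun p q =>
    if p = q then 1 + X 0 - (if (p : ℕ) = 0 then C (((m : ℕ)) : ℝ) * X 1 else 0) else 0
  have hC : ∀ c : ℝ, phi18 (C c) = Polynomial.C (C c) := fun c => by
    rw [phi18, aeval_C]; rfl
  have hX : ∀ i, phi18 (X i) = Polynomial.X * Polynomial.C (X i) := fun i => by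
    rw [phi18, aeval_X]
  refine ⟨P, Q, ?_, ?_, ?_⟩
  · intro i j
    simp only [P, of_apply]
    split_ifs <;> simp only [map_neg, map_mul, map_zero, hC, hX] <;> ring
  · intro i j
    simp only [Q, of_apply]
    split_ifs <;> simp only [map_neg, map_mul, map_zero, hC, hX] <;> ring
  · let e : Fin m ⊕ Fin m ≃ Fin (m + m) :=
      (Equiv.sumCongr Fin.revPerm (Equiv.refl _)).trans finSumFinEquiv
    have hl : ∀ p : Fin m, ((e (Sum.inl p) : Fin (m + m)) : ℕ) = m - 1 - p := by
      intro p; simp [e]; omega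
    have hr : ∀ p : Fin m, ((e (Sum.inr p) : Fin (m + m)) : ℕ) = m + p := by
      intro p; simp [e]; try omega
    have h1 : (src18 (m + m)).submatrix e e = fromBlocks A (P + A) (Q + A) D := by
      ext1 i j
      rcases i with i | i <;> rcases j with j | j
      · have hi := i.2
        have hj := j.2
        simp only [submatrix_apply, src18, of_apply, hl, fromBlocks_apply₁₁, A, diagonal_apply,
          EmbeddingLike.apply_eq_iff_eq, Sum.inl.injEq]
        rw [if_neg (by omega), if_neg (by omega)]
        simp
      · have hi := i.2
        have hj := j.2
        simp only [submatrix_apply, src18, of_apply, hl, hr, fromBlocks_apply₁₂, A, P, Matrix.add_apply,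
          diagonal_apply, EmbeddingLike.apply_eq_iff_eq, reduceCtorEq, if_false]
        by_cases h : i = j
        · subst h
          rw [if_pos (by omega), if_neg (by omega)]; simp
        · have h' : (i : ℕ) ≠ j := fun h0 => h (Fin.ext h0)
          rw [if_neg (by omega), if_neg h, if_neg h]
          by_cases h2 : (i : ℕ) + 1 = j
          · rw [if_pos (by omega), if_pos h2, show m - 1 - (i : ℕ) = m - j by omega]; ring
          · rw [if_neg (by omega), if_neg h2]; ring
      · have hi := i.2
        have hj := j.2
        simp only [submatrix_apply, src18, of_apply, hl, hr, fromBlocks_apply₂₁, A, Q, Matrix.add_apply,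
          diagonal_apply, EmbeddingLike.apply_eq_iff_eq, reduceCtorEq, if_false]
        by_cases h : i = j
        · subst h
          rw [if_pos (by omega), if_neg (by omega)]; simp
        · have h' : (i : ℕ) ≠ j := fun h0 => h (Fin.ext h0)
          rw [if_neg (by omega), if_neg h, if_neg h]
          by_cases h2 : (j : ℕ) + 1 = i
          · rw [if_pos (by omega), if_pos h2]; ring
          · rw [if_neg (by omega), if_neg h2]; ring
      · have hi := i.2
        have hj := j.2
        simp only [submatrix_apply, src18, of_apply, hr, fromBlocks_apply₂₂, D,
          EmbeddingLike.apply_eq_iff_eq, Sum.inr.injEq]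
        rw [if_neg (by omega)]
        by_cases h : i = j
        · subst h
          by_cases h2 : (i : ℕ) = 0
          · rw [if_pos (by omega), if_pos rfl, if_pos rfl, if_pos h2, h2, add_zero]; ring
          · rw [if_neg (by omega), if_pos rfl, if_pos rfl, if_neg h2]; ring
        · have h' : (i : ℕ) ≠ j := fun h0 => h (Fin.ext h0)
          rw [if_neg (by omega), if_neg h, if_neg h]; ring
    have h2 : fromBlocks A P Q (tgt18 m)ᵀ =
        fromBlocks 1 0 (-1) 1 * fromBlocks A (P + A) (Q + A) D * fromBlocks 1 (-1) 0 1 := by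
      simp only [fromBlocks_multiply, one_mul, mul_one, zero_mul, mul_zero, add_zero,
        neg_mul, mul_neg]
      congr 1
      · abel
      · abel
      · ext1 i j
        simp only [transpose_apply, tgt18, Matrix.add_apply, Matrix.neg_apply, of_apply, A, P, Q, D,
          diagonal_apply, map_add, Nat.cast_add, Nat.cast_one]
        by_cases h : i = j
        · subst h; simp only [if_true]; ring
        · have h' : (i : ℕ) ≠ j := fun h0 => h (Fin.ext h0)
          simp only [if_neg h, if_neg (Ne.symm h)]
          by_cases h2 : (i : ℕ) + 1 = j
          · rw [if_neg (by omega), if_pos h2, if_pos h2, if_neg (by omega)]; ring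
          · rw [if_neg h2, if_neg h2]
            by_cases h3 : (j : ℕ) + 1 = i
            · rw [if_pos h3, if_pos h3, ← h3]; push_cast; simp only [map_add]; ring
            · rw [if_neg h3, if_neg h3]; ring
    rw [show (diagonal fun _ => 1 + X 0 : Matrix (Fin m) (Fin m) (MvPolynomial (Fin 2) ℝ)) = A
      from rfl, h2, det_mul, det_mul, ← h1, det_submatrix_equiv_self, det_fromBlocks_zero₁₂,
      det_fromBlocks_zero₂₁]
    simp

lemma partA (l m : ℕ) (h : l = m + m) :
    (∀ k, k < m → homogeneousComponent k (src18 l).det = 0) ∧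
    homogeneousComponent m (src18 l).det = (tgt18 m).det := by
  subst h
  obtain ⟨P, Q, hP, hQ, hd⟩ := src_det m
  have hC : ∀ c : ℝ, phi18 (C c) = Polynomial.C (C c) := fun c => by
    rw [phi18, aeval_C]; rfl
  have hX : ∀ i, phi18 (X i) = Polynomial.X * Polynomial.C (X i) := fun i => by
    rw [phi18, aeval_X]
  obtain ⟨g, hg, hg0⟩ := coeff_core P Q (tgt18 m)ᵀ (X 0) (hX 0) hP hQ (by
    intro i j
    simp only [transpose_apply, tgt18, of_apply]
    split_ifs <;> simp only [map_sub, map_mul, map_zero, hC, hX, map_ofNat] <;> ring)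
  rw [hd]
  refine ⟨fun k hk => ?_, ?_⟩
  · rw [phi18_coeff, hg, Polynomial.coeff_X_pow_mul', if_neg (by omega)]
  · rw [phi18_coeff, hg, Polynomial.coeff_X_pow_mul', if_pos le_rfl, Nat.sub_self, hg0,
      det_transpose]

lemma eig_inj {m : ℕ} (H : Matrix (Fin m) (Fin m) ℝ) (hH : H.IsHermitian)
    (h0 : ∀ i j : Fin m, (i : ℕ) + 1 < j → H i j = 0)
    (h1 : ∀ i j : Fin m, (i : ℕ) + 1 = j → H i j ≠ 0) :
    Function.Injective hH.eigenvalues := by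
  have key : ∀ (lam : ℝ) (u : Fin m → ℝ), H *ᵥ u = lam • u →
      (∀ i : Fin m, (i : ℕ) = 0 → u i = 0) → u = 0 := by
    intro lam u hu hz
    have : ∀ n : ℕ, ∀ i : Fin m, (i : ℕ) = n → u i = 0 := by
      intro n
      induction n using Nat.strong_induction_on with
      | _ n ih =>
        intro i hi
        rcases n with _ | n
        · exact hz i hi
        · let k : Fin m := ⟨n, by omega⟩
          have hk := congrFun hu k
          simp only [mulVec, dotProduct, Pi.smul_apply, smul_eq_mul] at hk
          rw [ih n (by omega) k rfl, mul_zero, Finset.sum_eq_single i] at hk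
          · rcases mul_eq_zero.1 hk with h | h
            · exact absurd h (h1 k i (by simp [k, hi]))
            · exact h
          · intro b _ hb
            have hb' : (b : ℕ) ≠ i := fun h => hb (Fin.ext h)
            by_cases hbn : (b : ℕ) < n + 1
            · rw [ih b hbn b rfl, mul_zero]
            · rw [h0 k b (by simp only [k]; omega), zero_mul]
          · simp
    funext i
    exact this i i rfl
  intro i j hij
  by_contra hne
  have hm : 0 < m := Nat.pos_of_ne_zero (by rintro rfl; exact i.elim0)
  let z : Fin m := ⟨0, hm⟩
  let v := hH.eigenvectorBasis i
  let w := hH.eigenvectorBasis j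
  have hv : H *ᵥ v = hH.eigenvalues i • (v : Fin m → ℝ) := hH.mulVec_eigenvectorBasis i
  have hw : H *ᵥ w = hH.eigenvalues i • (w : Fin m → ℝ) := by
    rw [hij]; exact hH.mulVec_eigenvectorBasis j
  have hv0 : (v : EuclideanSpace ℝ (Fin m)) ≠ 0 := hH.eigenvectorBasis.orthonormal.ne_zero i
  have hu := key (hH.eigenvalues i) (w z • (v : Fin m → ℝ) - v z • (w : Fin m → ℝ)) (by
    rw [mulVec_sub, mulVec_smul, mulVec_smul, hv, hw, smul_sub, smul_comm (w z),
      smul_comm (v z)]) (by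
    intro k hk
    have : k = z := Fin.ext hk
    subst this
    simp; ring)
  have hu' : w z • v - v z • w = 0 := by
    ext k
    have := congrFun hu k
    simpa using this
  have hvw : inner ℝ w v = 0 := hH.eigenvectorBasis.orthonormal.2 (Ne.symm hne)
  have hww : inner ℝ w w = (1 : ℝ) := by
    rw [real_inner_self_eq_norm_sq, hH.eigenvectorBasis.orthonormal.1 j]; norm_num
  have hvz : v z = 0 := by
    have h5 : inner ℝ w (w z • v - v z • w) = 0 := by rw [hu', inner_zero_right]
    rw [inner_sub_right, inner_smul_right, inner_smul_right, hvw, hww] at h5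
    linarith
  have := key (hH.eigenvalues i) v hv (by
    intro k hk
    have : k = z := Fin.ext hk
    subst this
    exact hvz)
  apply hv0
  ext k
  exact congrFun this k

lemma partB (m : ℕ) (t : ℝ) (ht : 0 < t) : ∃ S : Finset ℝ, S.card = m ∧
      ∀ x : ℝ, MvPolynomial.eval (fun v : Fin 2 => if v = 0 then x else t) (tgt18 m).det = 0
        ↔ x ∈ S := by
  let b : ℕ → ℝ := fun k => t * ((m + 1 + k : ℕ) : ℝ)
  let c : ℕ → ℝ := fun k => t * ((m - (k + 1) : ℕ) : ℝ)
  have hb : ∀ k, 0 < b k := fun k => mul_pos ht (by exact_mod_cast (by omega))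
  have hc : ∀ k, k + 1 < m → 0 < c k := fun k hk => mul_pos ht (by exact_mod_cast (by omega))
  let s : ℕ → ℝ := fun k => Real.sqrt (b k * c k)
  have hs : ∀ k, k + 1 < m → 0 < s k := fun k hk => Real.sqrt_pos.2 (mul_pos (hb k) (hc k hk))
  have hss : ∀ k, k + 1 < m → s k * s k = b k * c k := fun k hk =>
    Real.mul_self_sqrt (mul_pos (hb k) (hc k hk)).le
  let d : ℕ → ℝ := fun k => ∏ j ∈ Finset.range k, (s j / b j)
  have hd : ∀ k, k < m → d k ≠ 0 := by
    intro k hk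
    refine Finset.prod_ne_zero_iff.2 fun j hj => ?_
    have := Finset.mem_range.1 hj
    exact (div_pos (hs j (by omega)) (hb j)).ne'
  have hds : ∀ k, d (k + 1) = d k * (s k / b k) := fun k => Finset.prod_range_succ _ _
  let H : Matrix (Fin m) (Fin m) ℝ := of fun i j =>
    if i = j then (if (i : ℕ) = 0 then - (m * t) else 0)
    else if (i : ℕ) + 1 = j then s i else if (j : ℕ) + 1 = i then s j else 0
  have hH : H.IsHermitian := by
    ext i j
    simp only [conjTranspose_apply, star_trivial, H, of_apply]
    by_cases h : i = j
    · subst h; rfl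
    · rw [if_neg h, if_neg (Ne.symm h)]
      split_ifs <;> first | rfl | omega
  have hinj := eig_inj H hH (by
    intro i j hij
    have h' : i ≠ j := by rintro rfl; omega
    simp only [H, of_apply]
    rw [if_neg h', if_neg (by omega), if_neg (by omega)]) (by
    intro i j hij
    have h' : i ≠ j := by rintro rfl; omega
    simp only [H, of_apply]
    rw [if_neg h', if_pos hij]
    exact (hs i (by omega)).ne')
  refine ⟨Finset.univ.image (fun i => - hH.eigenvalues i / 2), ?_, ?_⟩
  · rw [Finset.card_image_of_injective]
    · simp
    · intro i j hij
      apply hinj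
      simp only at hij
      linarith
  intro x
  let T : Matrix (Fin m) (Fin m) ℝ :=
    (tgt18 m).map (MvPolynomial.eval (fun v : Fin 2 => if v = 0 then x else t))
  have hT : MvPolynomial.eval (fun v : Fin 2 => if v = 0 then x else t) (tgt18 m).det = T.det := by
    rw [RingHom.map_det]; rfl
  have hsim : T * diagonal (fun i : Fin m => d i) =
      diagonal (fun i : Fin m => d i) * (diagonal (fun _ => 2 * x) + H) := by
    ext i j
    rw [mul_diagonal, diagonal_mul]
    simp only [T, tgt18, map_apply, of_apply, Matrix.add_apply, H, diagonal_apply]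
    by_cases h : i = j
    · subst h
      simp only [if_true]
      by_cases h2 : (i : ℕ) = 0 <;> simp [h2] <;> ring
    · simp only [if_neg h]
      by_cases h2 : (i : ℕ) + 1 = j
      · simp only [if_pos h2, zero_add]
        rw [← h2, hds]
        have hbi := (hb i).ne'
        have : (MvPolynomial.eval (fun v : Fin 2 => if v = 0 then x else t))
          (C ((m + 1 + (i : ℕ) : ℕ) : ℝ) * X 1) = b i := by simp [b]; ring
        rw [this]
        field_simp
      · simp only [if_neg h2]
        by_cases h3 : (j : ℕ) + 1 = i
        · simp only [if_pos h3, zero_add]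
          have hbi := (hb j).ne'
          have : (MvPolynomial.eval (fun v : Fin 2 => if v = 0 then x else t))
            (C ((m - (i : ℕ) : ℕ) : ℝ) * X 1) = c j := by simp [c, h3]; ring
          rw [this, ← h3, hds]
          have := hss j (by omega)
          field_simp
          linear_combination (- d j) * this
        · simp [if_neg h3]
  have hdet : T.det = (diagonal (fun _ => 2 * x) + H).det := by
    have := congrArg det hsim
    rw [det_mul, det_mul, mul_comm] at this
    refine mul_left_cancel₀ ?_ this
    rw [det_diagonal]
    exact Finset.prod_ne_zero_iff.2 fun i _ => hd i i.2
  have hch : (diagonal (fun _ => 2 * x) + H).det = 0 ↔ H.charpoly.eval (-2 * x) = 0 := by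
    rw [eval_charpoly]
    have : scalar (Fin m) (-2 * x) - H = - (diagonal (fun _ => 2 * x) + H) := by
      ext i j
      by_cases h : i = j
      · subst h; simp; ring
      · simp [h]
    rw [this, det_neg]
    simp
  rw [hT, hdet, hch, hH.charpoly_eq, Polynomial.eval_prod, Finset.prod_eq_zero_iff]
  simp only [Finset.mem_univ, true_and, Finset.mem_image]
  refine exists_congr fun i => ?_
  simp
  constructor <;> intro h <;> linarith

/-- for even l, the lowest homogeneous part in (a,θ) (X 0 = a,
X 1 = θ) of the homogenized determinant det(𝒢_l + r·Id) with μ = 1, r = 1+a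
(the constants -(j-1) below the antidiagonal being homogenized to -(j-1)θ)
equals the determinant of the (l/2)×(l/2) tridiagonal matrix with diagonal
(2a - (l/2)θ, 2a, …, 2a), superdiagonal ((l/2)+1)θ, …, (l-1)θ and subdiagonal
((l/2)-1)θ, …, θ; moreover for each fixed θ > 0 this determinant, as a
polynomial in a, has l/2 distinct real roots. -/
theorem stmt18 (l : ℕ) (hl : 2 ≤ l) (heven : Even l) :
    (∀ k : ℕ, k < l / 2 →
      MvPolynomial.homogeneousComponent k
        ((Matrix.of fun i j : Fin l =>
          ((if (i : ℕ) + (j : ℕ) = l - 1 then 1 else 0)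
          + (if (i : ℕ) + (j : ℕ) = l then -(C (((i : ℕ) : ℕ) : ℝ)) * X 1 else 0)
          + (if i = j then 1 + X 0 else 0) : MvPolynomial (Fin 2) ℝ)).det) = 0) ∧
    MvPolynomial.homogeneousComponent (l / 2)
      ((Matrix.of fun i j : Fin l =>
        ((if (i : ℕ) + (j : ℕ) = l - 1 then 1 else 0)
        + (if (i : ℕ) + (j : ℕ) = l then -(C (((i : ℕ) : ℕ) : ℝ)) * X 1 else 0)
        + (if i = j then 1 + X 0 else 0) : MvPolynomial (Fin 2) ℝ)).det)
    = (Matrix.of fun i j : Fin (l / 2) =>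
        (if i = j then
          2 * X 0 - (if (i : ℕ) = 0 then C (((l / 2 : ℕ)) : ℝ) * X 1 else 0)
        else if (i : ℕ) + 1 = (j : ℕ) then C (((l / 2 + 1 + (i : ℕ) : ℕ)) : ℝ) * X 1
        else if (j : ℕ) + 1 = (i : ℕ) then C (((l / 2 - (i : ℕ) : ℕ)) : ℝ) * X 1
        else 0 : MvPolynomial (Fin 2) ℝ)).det ∧
    ∀ t : ℝ, 0 < t → ∃ S : Finset ℝ, S.card = l / 2 ∧
      ∀ x : ℝ,
        MvPolynomial.eval (fun v : Fin 2 => if v = 0 then x else t)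
          ((Matrix.of fun i j : Fin (l / 2) =>
            (if i = j then
              2 * X 0 - (if (i : ℕ) = 0 then C (((l / 2 : ℕ)) : ℝ) * X 1 else 0)
            else if (i : ℕ) + 1 = (j : ℕ) then C (((l / 2 + 1 + (i : ℕ) : ℕ)) : ℝ) * X 1
            else if (j : ℕ) + 1 = (i : ℕ) then C (((l / 2 - (i : ℕ) : ℕ)) : ℝ) * X 1
            else 0 : MvPolynomial (Fin 2) ℝ)).det) = 0 ↔ x ∈ S := by
  have h : l = l / 2 + l / 2 := by obtain ⟨k, hk⟩ := heven; omega
  obtain ⟨h1, h2⟩ := partA l (l / 2) h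
  exact ⟨h1, h2, fun t ht => partB (l / 2) t ht⟩
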